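/- Let A be a hereditary abelian category (Ext^i vanishes for i ≥ 2) with enough injectives. Then every object t of the unbounded derived category D(A) is isomorphic to the direct sum over i ∈ ℤ of its shifted homology objects H_i(t)[i]. -/

import Mathlib

open CategoryTheory Limits

/-!
Write `S_n` for the functor placing an object in degree `n`. In a two-term complex, the connecting
map between its two homology objects is a class in `Ext²`, so heredity splits the complex. Now a
brutal two-term truncation of (a canonical truncation of) `t` has `H_n t` as its top or bottom
homology, according to the side, which yields maps `S_n (H_n t) ⟶ t` and `t ⟶ S_n (H_n t)` that
are isomorphisms on `H_n`.

It remains to see that the induced map `∐ S_n (H_n t) ⟶ t` is an isomorphism on each `H_m`. It is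
epi there because its `m`-th component is. It is mono there because the map from `∐ S_n (H_n t)` to
its own `S_m (H_m _)` factors through `t`: nonzero maps `S_n X ⟶ S_m Y` only exist for
`n = m, m + 1`, so only two components have to be extended along the split monomorphisms
`S_n (H_n t) ⟶ t`, one after the other.
-/

section Complexes

open HomologicalComplex

section

variable {C ι : Type*} [Category C] [HasZeroMorphisms C] {c : ComplexShape ι}

lemma quasiIsoAt_of_epi_of_isIso_of_mono {K L : HomologicalComplex C c} (φ : K ⟶ L) {i j k : ι}
    (hi : c.prev j = i) (hk : c.next j = k) [Epi (φ.f i)] [IsIso (φ.f j)] [Mono (φ.f k)]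
    [K.HasHomology j] [L.HasHomology j] : QuasiIsoAt φ j := by
  have : (K.sc' i j k).HasHomology := ShortComplex.hasHomology_of_iso (K.isoSc' i j k hi hk)
  have : (L.sc' i j k).HasHomology := ShortComplex.hasHomology_of_iso (L.isoSc' i j k hi hk)
  rw [quasiIsoAt_iff' φ i j k hi hk]
  let ψ := (shortComplexFunctor' C c i j k).map φ
  have : Epi ψ.τ₁ := ‹Epi (φ.f i)›
  have : IsIso ψ.τ₂ := ‹IsIso (φ.f j)›
  have : Mono ψ.τ₃ := ‹Mono (φ.f k)›
  exact ShortComplex.quasiIso_of_epi_of_isIso_of_mono ψ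

variable [HasZeroObject C] {X₀ X₁ : C} {f : X₀ ⟶ X₁} {i₀ i₁ : ι} (hi : c.Rel i₀ i₁)
  (hne : i₀ ≠ i₁) {K : HomologicalComplex C c} (φ₀ : K.X i₀ ⟶ X₀) (φ₁ : K.X i₁ ⟶ X₁)

open scoped Classical in
/-- Constructor for morphisms to `HomologicalComplex.double`, dual to
`HomologicalComplex.mkHomFromDouble`. -/
noncomputable def homToDouble (comm : φ₀ ≫ f = K.d i₀ i₁ ≫ φ₁)
    (hφ₀ : ∀ k, c.Rel k i₀ → K.d k i₀ ≫ φ₀ = 0) : K ⟶ double f hi where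
  f k :=
    if h₀ : k = i₀ then
      eqToHom (by rw [h₀]) ≫ φ₀ ≫ (doubleXIso₀ f hi).inv ≫ eqToHom (by rw [h₀])
    else if h₁ : k = i₁ then
      eqToHom (by rw [h₁]) ≫ φ₁ ≫ (doubleXIso₁ f hi hne).inv ≫ eqToHom (by rw [h₁])
    else 0
  comm' j k hjk := by
    by_cases h₁ : k = i₁
    · subst h₁
      obtain rfl := c.prev_eq hjk hi
      simp [hne.symm, double_d f hi hne, reassoc_of% comm]
    · by_cases h₀ : k = i₀
      · subst h₀
        simp [double_d_eq_zero₁ f hi j k hne, reassoc_of% (hφ₀ j hjk)]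
      · exact (isZero_double_X f hi k h₀ h₁).eq_of_tgt _ _

variable (comm : φ₀ ≫ f = K.d i₀ i₁ ≫ φ₁) (hφ₀ : ∀ k, c.Rel k i₀ → K.d k i₀ ≫ φ₀ = 0)

lemma homToDouble_f₀ :
    (homToDouble hi hne φ₀ φ₁ comm hφ₀).f i₀ = φ₀ ≫ (doubleXIso₀ f hi).inv := by
  simp [homToDouble]

lemma homToDouble_f₁ :
    (homToDouble hi hne φ₀ φ₁ comm hφ₀).f i₁ = φ₁ ≫ (doubleXIso₁ f hi hne).inv := by
  simp [homToDouble, hne.symm]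

end

variable {C : Type*} [Category C] [Abelian C]

/-- The brutal truncation `K.X n ⟶ K.X (n + 1)` of a cochain complex `K` to the two
degrees `n` and `n + 1`. -/
noncomputable def twoTerm (K : CochainComplex C ℤ) (n : ℤ) : CochainComplex C ℤ :=
  double (K.d n (n + 1)) (show (ComplexShape.up ℤ).Rel n (n + 1) from rfl)

namespace twoTerm

variable (K : CochainComplex C ℤ) (n : ℤ)

instance : (twoTerm K n).IsStrictlyGE n :=
  (CochainComplex.isStrictlyGE_iff _ _).2 fun i _ ↦ isZero_double_X _ _ i (by lia) (by lia)

instance : (twoTerm K n).IsStrictlyLE (n + 1) :=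
  (CochainComplex.isStrictlyLE_iff _ _).2 fun i _ ↦ isZero_double_X _ _ i (by lia) (by lia)

/-- The inclusion of the brutal truncation of a complex concentrated in degrees `≤ n + 1`. -/
noncomputable def ι [K.IsStrictlyLE (n + 1)] : twoTerm K n ⟶ K :=
  mkHomFromDouble _ (by lia) (𝟙 _) (𝟙 _) (by simp) fun k hk ↦
    (K.isZero_of_isStrictlyLE (n + 1) k (by simp at hk; lia)).eq_of_tgt _ _

/-- The projection to the brutal truncation of a complex concentrated in degrees `≥ n`. -/
noncomputable def π [K.IsStrictlyGE n] : K ⟶ twoTerm K n :=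
  homToDouble _ (by lia) (𝟙 _) (𝟙 _) (by simp) fun k hk ↦
    (K.isZero_of_isStrictlyGE n k (by simp at hk; lia)).eq_of_src _ _

instance quasiIsoAt_ι [K.IsStrictlyLE (n + 1)] : QuasiIsoAt (ι K n) (n + 1) := by
  have : IsIso ((ι K n).f n) := by
    rw [ι, mkHomFromDouble_f₀, Category.comp_id]
    exact Iso.isIso_hom _
  have : IsIso ((ι K n).f (n + 1)) := by
    rw [ι, mkHomFromDouble_f₁, Category.comp_id]
    exact Iso.isIso_hom _
  have : Mono ((ι K n).f (n + 1 + 1)) :=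
    ⟨fun _ _ _ ↦ ((twoTerm K n).isZero_of_isStrictlyLE (n + 1) (n + 1 + 1)).eq_of_tgt _ _⟩
  exact quasiIsoAt_of_epi_of_isIso_of_mono (i := n) (k := n + 1 + 1) _ (by simp) (by simp)

instance quasiIsoAt_π [K.IsStrictlyGE n] : QuasiIsoAt (π K n) n := by
  have : Epi ((π K n).f (n - 1)) :=
    ⟨fun _ _ _ ↦ ((twoTerm K n).isZero_of_isStrictlyGE n (n - 1)).eq_of_src _ _⟩
  have : IsIso ((π K n).f n) := by
    rw [π, homToDouble_f₀, Category.id_comp]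
    exact Iso.isIso_inv _
  have : IsIso ((π K n).f (n + 1)) := by
    rw [π, homToDouble_f₁, Category.id_comp]
    exact Iso.isIso_inv _
  exact quasiIsoAt_of_epi_of_isIso_of_mono (i := n - 1) (k := n + 1) _ (by simp) (by simp)

end twoTerm

end Complexes

section DerivedCategory

open DerivedCategory Pretriangulated

variable {C : Type*} [Category C] [Abelian C] [HasDerivedCategory C]

lemma isIso_homologyFunctor_map_Q_map {K L : CochainComplex C ℤ} (φ : K ⟶ L) (n : ℤ)
    [QuasiIsoAt φ n] : IsIso ((homologyFunctor C n).map (Q.map φ)) :=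
  (NatIso.isIso_map_iff (homologyFunctorFactors C n) φ).2
    (inferInstanceAs (IsIso (HomologicalComplex.homologyMap φ n)))

lemma exists_hom_from_amplitude_two (t : DerivedCategory C) (n : ℤ) :
    ∃ (X : DerivedCategory C) (_ : X.IsGE n) (_ : X.IsLE (n + 1)) (p : X ⟶ t),
      IsIso ((homologyFunctor C (n + 1)).map p) := by
  let K := Q.objPreimage t
  let φ := twoTerm.ι (K.truncLE (n + 1)) n ≫ K.ιTruncLE (n + 1)
  have := isIso_homologyFunctor_map_Q_map φ (n + 1)
  refine ⟨Q.obj (twoTerm (K.truncLE (n + 1)) n), inferInstance, inferInstance,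
    Q.map φ ≫ (Q.objObjPreimageIso t).hom, ?_⟩
  rw [Functor.map_comp]
  infer_instance

lemma exists_hom_to_amplitude_two (t : DerivedCategory C) (n : ℤ) :
    ∃ (X : DerivedCategory C) (_ : X.IsGE n) (_ : X.IsLE (n + 1)) (p : t ⟶ X),
      IsIso ((homologyFunctor C n).map p) := by
  let K := Q.objPreimage t
  let φ := K.πTruncGE n ≫ twoTerm.π (K.truncGE n) n
  have := isIso_homologyFunctor_map_Q_map φ n
  refine ⟨Q.obj (twoTerm (K.truncGE n) n), inferInstance, inferInstance,
    (Q.objObjPreimageIso t).inv ≫ Q.map φ, ?_⟩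
  rw [Functor.map_comp]
  infer_instance

lemma isIso_homologyFunctor_map_truncLTι_app (X : DerivedCategory C) {i n : ℤ} (hi : i < n) :
    IsIso ((homologyFunctor C i).map ((TStructure.t.truncLTι n).app X)) := by
  let T := (TStructure.t.triangleLTGE n).obj X
  have hT : T ∈ distTriang _ := TStructure.t.triangleLTGE_distinguished n X
  have : Mono ((homologyFunctor C i).map T.mor₁) :=
    (HomologySequence.mono_homologyMap_mor₁_iff T hT (i - 1) i).2
      ((isZero_of_isGE T.obj₃ n (i - 1) (by lia)).eq_of_src _ _)
  have : Epi ((homologyFunctor C i).map T.mor₁) :=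
    (HomologySequence.epi_homologyMap_mor₁_iff T hT i).2
      ((isZero_of_isGE T.obj₃ n i hi).eq_of_tgt _ _)
  exact isIso_of_mono_of_epi ((homologyFunctor C i).map T.mor₁)

lemma isIso_homologyFunctor_map_truncGEπ_app (X : DerivedCategory C) {i n : ℤ} (hi : n ≤ i) :
    IsIso ((homologyFunctor C i).map ((TStructure.t.truncGEπ n).app X)) := by
  let T := (TStructure.t.triangleLTGE n).obj X
  have hT : T ∈ distTriang _ := TStructure.t.triangleLTGE_distinguished n X
  have : Mono ((homologyFunctor C i).map T.mor₂) :=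
    (HomologySequence.mono_homologyMap_mor₂_iff T hT i).2
      ((isZero_of_isLE T.obj₁ (n - 1) i (by lia)).eq_of_src _ _)
  have : Epi ((homologyFunctor C i).map T.mor₂) :=
    (HomologySequence.epi_homologyMap_mor₂_iff T hT i (i + 1)).2
      ((isZero_of_isLE T.obj₁ (n - 1) (i + 1) (by lia)).eq_of_tgt _ _)
  exact isIso_of_mono_of_epi ((homologyFunctor C i).map T.mor₂)

lemma isIso_of_isIso_homologyFunctor_map {X Y : DerivedCategory C} (f : X ⟶ Y) (n : ℤ)
    [X.IsGE n] [X.IsLE n] [Y.IsGE n] [Y.IsLE n] [IsIso ((homologyFunctor C n).map f)] :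
    IsIso f := by
  rw [isIso_iff]
  intro i
  obtain hi | rfl | hi := lt_trichotomy i n
  · exact (isZero_of_isGE X n i hi).isIso (isZero_of_isGE Y n i hi) _
  · assumption
  · exact (isZero_of_isLE X n i hi).isIso (isZero_of_isLE Y n i hi) _

lemma nonempty_iso_singleFunctor_obj_homology (X : DerivedCategory C) (n : ℤ)
    [X.IsGE n] [X.IsLE n] :
    Nonempty (X ≅ (singleFunctor C n).obj ((homologyFunctor C n).obj X)) := by
  obtain ⟨Y, ⟨e⟩⟩ := exists_iso_singleFunctor_obj_of_isGE_of_isLE X n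
  let j : (homologyFunctor C n).obj X ≅ Y :=
    (homologyFunctor C n).mapIso e ≪≫ (singleFunctorCompHomologyFunctorIso C n).app Y
  exact ⟨e ≪≫ (singleFunctor C n).mapIso j.symm⟩

variable (C) in
/-- An abelian category is hereditary if its `Ext`-groups vanish in all degrees `≥ 2`; these
groups are encoded as groups of shifted morphisms in the derived category. -/
def IsHereditary : Prop :=
  ∀ (X Y : C) (n : ℤ), 2 ≤ n →
    ∀ f : (singleFunctor C 0).obj X ⟶ ((singleFunctor C 0).obj Y)⟦n⟧, f = 0

namespace IsHereditary

variable (hC : IsHereditary C)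
include hC

lemma hom_singleFunctor_eq_zero {X Y : C} {m n : ℤ} (h₀ : m ≠ n) (h₁ : m ≠ n + 1)
    (f : (singleFunctor C m).obj X ⟶ (singleFunctor C n).obj Y) : f = 0 := by
  obtain h | h : m < n ∨ 2 ≤ m - n := by lia
  · exact TStructure.t.zero_of_isLE_of_isGE f m n h inferInstance inferInstance
  · let eX := ((singleFunctors C).shiftIso m 0 m (add_zero m)).app X
    let eY := ((singleFunctors C).shiftIso m (n - m) n (by lia)).app Y ≪≫
      (((singleFunctors C).shiftIso (m - n) (n - m) 0 (by lia)).app Y).symm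
    have hf : eX.inv ≫ f⟦m⟧' ≫ eY.hom = 0 := hC X Y (m - n) h _
    apply (shiftFunctor (DerivedCategory C) m).map_injective
    rw [Functor.map_zero, ← cancel_epi eX.inv, ← cancel_mono eY.hom]
    simpa using hf

lemma truncGEδLT_app_eq_zero (X : DerivedCategory C) (n : ℤ) [X.IsGE n] [X.IsLE (n + 1)] :
    (TStructure.t.truncGEδLT (n + 1)).app X = 0 := by
  obtain ⟨Y, ⟨eY⟩⟩ := exists_iso_singleFunctor_obj_of_isGE_of_isLE
    ((TStructure.t.truncGE (n + 1)).obj X) (n + 1)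
  obtain ⟨Z, ⟨eZ⟩⟩ := exists_iso_singleFunctor_obj_of_isGE_of_isLE
    ((TStructure.t.truncLT (n + 1)).obj X) n
  let e := (shiftFunctor _ (1 : ℤ)).mapIso eZ ≪≫
    ((singleFunctors C).shiftIso 1 (n - 1) n (by lia)).app Z
  rw [← cancel_epi eY.inv, ← cancel_mono e.hom, comp_zero, zero_comp]
  exact hC.hom_singleFunctor_eq_zero (by lia) (by lia) _

lemma exists_hom_from_single_homology (t : DerivedCategory C) (n : ℤ) :
    ∃ φ : (singleFunctor C n).obj ((homologyFunctor C n).obj t) ⟶ t,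
      IsIso ((homologyFunctor C n).map φ) := by
  obtain ⟨n, rfl⟩ : ∃ m, n = m + 1 := ⟨n - 1, by lia⟩
  obtain ⟨X, _, _, p, _⟩ := exists_hom_from_amplitude_two t n
  let π := (TStructure.t.truncGEπ (n + 1)).app X
  have : Epi π := Triangle.epi₂ _ (TStructure.t.triangleLTGE_distinguished (n + 1) X)
    (hC.truncGEδLT_app_eq_zero X n)
  have : IsSplitEpi π := isSplitEpi_of_epi π
  have : IsIso ((homologyFunctor C (n + 1)).map π) :=
    isIso_homologyFunctor_map_truncGEπ_app X le_rfl
  have : IsIso ((homologyFunctor C (n + 1)).map (section_ π)) :=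
    isIso_of_comp_hom_eq_id ((homologyFunctor C (n + 1)).map π) (by simp [← Functor.map_comp])
  let s := section_ π ≫ p
  have : IsIso ((homologyFunctor C (n + 1)).map s) := by
    rw [Functor.map_comp]
    infer_instance
  obtain ⟨e⟩ := nonempty_iso_singleFunctor_obj_homology
    ((TStructure.t.truncGE (n + 1)).obj X) (n + 1)
  refine ⟨(singleFunctor C (n + 1)).map (inv ((homologyFunctor C (n + 1)).map s)) ≫
    e.inv ≫ s, ?_⟩
  simp only [Functor.map_comp]
  infer_instance

lemma exists_hom_to_single_homology (t : DerivedCategory C) (n : ℤ) :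
    ∃ ρ : t ⟶ (singleFunctor C n).obj ((homologyFunctor C n).obj t),
      IsIso ((homologyFunctor C n).map ρ) := by
  obtain ⟨X, _, _, p, _⟩ := exists_hom_to_amplitude_two t n
  let ι := (TStructure.t.truncLTι (n + 1)).app X
  have : Mono ι := Triangle.mono₁ _ (TStructure.t.triangleLTGE_distinguished (n + 1) X)
    (hC.truncGEδLT_app_eq_zero X n)
  have : IsSplitMono ι := isSplitMono_of_mono ι
  have : IsIso ((homologyFunctor C n).map ι) :=
    isIso_homologyFunctor_map_truncLTι_app X (by lia)
  have : IsIso ((homologyFunctor C n).map (retraction ι)) :=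
    isIso_of_hom_comp_eq_id ((homologyFunctor C n).map ι) (by simp [← Functor.map_comp])
  let r := p ≫ retraction ι
  have : IsIso ((homologyFunctor C n).map r) := by
    rw [Functor.map_comp]
    infer_instance
  obtain ⟨e⟩ := nonempty_iso_singleFunctor_obj_homology ((TStructure.t.truncLT (n + 1)).obj X) n
  refine ⟨r ≫ e.hom ≫ (singleFunctor C n).map (inv ((homologyFunctor C n).map r)), ?_⟩
  simp only [Functor.map_comp]
  infer_instance

lemma isSplitMono_of_isIso_homologyFunctor_map {Y t : DerivedCategory C} {n : ℤ} [Y.IsGE n]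
    [Y.IsLE n] (φ : Y ⟶ t) [IsIso ((homologyFunctor C n).map φ)] : IsSplitMono φ := by
  obtain ⟨ρ, _⟩ := hC.exists_hom_to_single_homology t n
  have : IsIso ((homologyFunctor C n).map (φ ≫ ρ)) := by
    rw [Functor.map_comp]
    infer_instance
  have : IsIso (φ ≫ ρ) := isIso_of_isIso_homologyFunctor_map _ n
  exact ⟨⟨⟨ρ ≫ inv (φ ≫ ρ), by rw [← Category.assoc, IsIso.hom_inv_id]⟩⟩⟩

variable {t : DerivedCategory C} {Y : ℤ → C} (φ : ∀ n, (singleFunctor C n).obj (Y n) ⟶ t)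
  [∀ n, IsIso ((homologyFunctor C n).map (φ n))]

lemma exists_comp_eq {m : ℤ} {Z : C}
    (g : ∀ n, (singleFunctor C n).obj (Y n) ⟶ (singleFunctor C m).obj Z) :
    ∃ k : t ⟶ (singleFunctor C m).obj Z, ∀ n, φ n ≫ k = g n := by
  have (n : ℤ) : IsSplitMono (φ n) := hC.isSplitMono_of_isIso_homologyFunctor_map (n := n) (φ n)
  let a := retraction (φ m) ≫ g m
  -- The correction `b` in degree `m + 1` vanishes in degree `m`, as `φ m` has no component there.
  let b := retraction (φ (m + 1)) ≫ (g (m + 1) - φ (m + 1) ≫ a)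
  refine ⟨a + b, fun n ↦ ?_⟩
  by_cases h₁ : n = m + 1
  · subst h₁
    simp [b]
  by_cases h₀ : n = m
  · subst h₀
    have : φ n ≫ retraction (φ (n + 1)) = 0 :=
      hC.hom_singleFunctor_eq_zero (by lia) (by lia) _
    simp [a, b, reassoc_of% this]
  · rw [hC.hom_singleFunctor_eq_zero h₀ h₁ (g n), hC.hom_singleFunctor_eq_zero h₀ h₁ (φ n ≫ _)]

theorem isIso_sigmaDesc [HasCoproduct fun n ↦ (singleFunctor C n).obj (Y n)] :
    IsIso (Sigma.desc φ) := by
  rw [isIso_iff]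
  intro m
  have : Epi ((homologyFunctor C m).map (Sigma.desc φ)) := by
    have : Epi ((homologyFunctor C m).map (Sigma.ι (fun n ↦ (singleFunctor C n).obj (Y n)) m) ≫
        (homologyFunctor C m).map (Sigma.desc φ)) := by
      rw [← Functor.map_comp, Sigma.ι_desc]
      infer_instance
    exact epi_of_epi
      ((homologyFunctor C m).map (Sigma.ι (fun n ↦ (singleFunctor C n).obj (Y n)) m)) _
  have : Mono ((homologyFunctor C m).map (Sigma.desc φ)) := by
    obtain ⟨ρ, _⟩ := hC.exists_hom_to_single_homology
      (∐ fun n ↦ (singleFunctor C n).obj (Y n)) m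
    obtain ⟨k, hk⟩ := hC.exists_comp_eq φ fun n ↦
      Sigma.ι (fun n ↦ (singleFunctor C n).obj (Y n)) n ≫ ρ
    have hρ : Sigma.desc φ ≫ k = ρ := Sigma.hom_ext _ _ fun n ↦ by rw [Sigma.ι_desc_assoc, hk]
    have : Mono ((homologyFunctor C m).map (Sigma.desc φ) ≫ (homologyFunctor C m).map k) := by
      rw [← Functor.map_comp, hρ]
      infer_instance
    exact mono_of_mono _ ((homologyFunctor C m).map k)
  exact isIso_of_mono_of_epi _

end IsHereditary

theorem stmt_14_general {C : Type*} [Category C] [Abelian C] [HasDerivedCategory C]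
    (hC : IsHereditary C) (t : DerivedCategory C)
    [HasCoproduct fun n : ℤ ↦ (singleFunctor C n).obj ((homologyFunctor C n).obj t)] :
    Nonempty (t ≅ ∐ fun n : ℤ ↦ (singleFunctor C n).obj ((homologyFunctor C n).obj t)) := by
  choose φ _ using hC.exists_hom_from_single_homology t
  have := hC.isIso_sigmaDesc φ
  exact ⟨(asIso (Sigma.desc φ)).symm⟩

end DerivedCategory

/-- Let `A` be a hereditary abelian category with enough injectives (hereditary:
all `Ext^n` for `n ≥ 2` vanish, expressed by the vanishing of `n`-fold shifted
morphisms between objects of `A` in the derived category).  Then every object `t` of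
the unbounded derived category `D(A)` is isomorphic to the direct sum over `n ∈ ℤ` of
its shifted homology objects `H^n(t)[n]` (i.e. `H^n(t)` placed in degree `n`). -/
theorem stmt_14 {C : Type*} [Category C] [Abelian C] [EnoughInjectives C]
    [HasDerivedCategory C]
    (hher : ∀ (X Y : C) (n : ℤ), 2 ≤ n →
      ∀ f : (DerivedCategory.singleFunctor C 0).obj X ⟶
        ((DerivedCategory.singleFunctor C 0).obj Y)⟦n⟧, f = 0)
    (t : DerivedCategory C)
    [HasCoproduct fun n : ℤ =>
      (DerivedCategory.singleFunctor C n).obj ((DerivedCategory.homologyFunctor C n).obj t)] :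
    Nonempty (t ≅ ∐ fun n : ℤ =>
      (DerivedCategory.singleFunctor C n).obj ((DerivedCategory.homologyFunctor C n).obj t)) :=
  stmt_14_general hher t
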